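/- Let n be even, let A be a subgroup of (ℤ/nℤ)^× such that n/2 − a ∈ A for every a ∈ A (equivalently, A satisfies the orbit decomposition A = {jn/k+1 : j ∈ J₊} ∪ {jn/k−1 : j ∈ J₋} with k even and J₋ = k/2 − J₊ modulo k), let r ∈ ℤ/nℤ have odd integer representative, and let X = Ar. Then for every y ∈ ℤ/nℤ: if y is even then σ_X(y) is real, and if y is odd then σ_X(y) is purely imaginary (its real part is zero). -/

import Mathlib

open Complex

/-- `e(θ) = exp(2πiθ)`. -/
noncomputable def e2 (θ : ℝ) : ℂ := Complex.exp (2 * Real.pi * Complex.I * θ)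

/-- The cyclic supercharacter attached to a subset `X` of `ℤ/nℤ`:
`σ_X(y) = Σ_{x ∈ X} e(xy/n)`. -/
noncomputable def superchar (n : ℕ) (X : Set (ZMod n)) (y : ZMod n) : ℂ :=
  ∑ᶠ x ∈ X, e2 (((x.val * y.val : ℕ) : ℝ) / (n : ℝ))

/-- The orbit `Ar = {ar : a ∈ A}` of `r` under a unit subgroup `A`. -/
def unitOrbit (n : ℕ) (A : Subgroup (ZMod n)ˣ) (r : ZMod n) : Set (ZMod n) :=
  (fun a : (ZMod n)ˣ => (a : ZMod n) * r) '' (A : Set (ZMod n)ˣ)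


lemma e2_eq (n : ℕ) [NeZero n] (x y : ZMod n) :
    e2 (((x.val * y.val : ℕ) : ℝ) / (n : ℝ)) = ZMod.stdAddChar (x * y) := by
  have h : x * y = (((x.val * y.val : ℕ) : ℤ) : ZMod n) := by
    push_cast
    simp
  rw [h, ZMod.stdAddChar_coe, e2]
  congr 1
  push_cast
  ring

lemma half_mul (n : ℕ) [NeZero n] (he : Even n) (r : ZMod n) :
    (Odd r.val → ((n / 2 : ℕ) : ZMod n) * r = ((n / 2 : ℕ) : ZMod n)) ∧
    (Even r.val → ((n / 2 : ℕ) : ZMod n) * r = 0) := by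
  obtain ⟨m, hm⟩ := he
  have h2 : n / 2 = m := by omega
  have h0 : (m : ZMod n) + m = 0 := by
    rw [← Nat.cast_add, ← hm]; simp
  rw [h2]
  constructor
  · rintro ⟨k, hk⟩
    have : r = ((2 * k + 1 : ℕ) : ZMod n) := by rw [← hk]; simp
    rw [this]; push_cast
    linear_combination (k : ZMod n) * h0
  · rintro ⟨k, hk⟩
    have : r = ((k + k : ℕ) : ZMod n) := by rw [← hk]; simp
    rw [this]; push_cast
    linear_combination (k : ZMod n) * h0

lemma char_half (n : ℕ) [NeZero n] (he : Even n) :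
    (ZMod.stdAddChar ((n / 2 : ℕ) : ZMod n) : ℂ) = -1 := by
  have hn : (n : ℂ) ≠ 0 := by exact_mod_cast NeZero.ne n
  have h : ((n / 2 : ℕ) : ZMod n) = (((n / 2 : ℕ) : ℤ) : ZMod n) :=
    (Int.cast_natCast _).symm
  rw [h, ZMod.stdAddChar_coe, ← Complex.exp_pi_mul_I]
  congr 1
  obtain ⟨m, hm⟩ := he
  have h2 : n / 2 = m := by omega
  have h3 : (n : ℂ) = m + m := by exact_mod_cast hm
  rw [h2]
  push_cast
  field_simp
  rw [h3]; ring

lemma superchar_eq (n : ℕ) [NeZero n] (X : Set (ZMod n)) (y : ZMod n)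
    (hX : ∀ x ∈ X, ((n / 2 : ℕ) : ZMod n) - x ∈ X) :
    superchar n X y = ZMod.stdAddChar (((n / 2 : ℕ) : ZMod n) * y) *
      (starRingEnd ℂ) (superchar n X y) := by
  classical
  unfold superchar
  simp_rw [e2_eq]
  rw [finsum_mem_eq_finite_toFinset_sum _ X.toFinite, map_sum, Finset.mul_sum]
  refine Finset.sum_bij' (fun x _ => ((n / 2 : ℕ) : ZMod n) - x)
    (fun x _ => ((n / 2 : ℕ) : ZMod n) - x) ?_ ?_ ?_ ?_ ?_
  · intro x hx; simpa using hX x (by simpa using hx)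
  · intro x hx; simpa using hX x (by simpa using hx)
  · intro x _; simp
  · intro x _; simp
  · intro x _
    rw [← AddChar.map_neg_eq_conj, ← AddChar.map_add_eq_mul]
    congr 1; ring

theorem stmt11 (n : ℕ) (hn : 0 < n) (he : Even n)
    (A : Subgroup (ZMod n)ˣ)
    (hA : ∀ a : (ZMod n)ˣ, a ∈ A → ∃ b : (ZMod n)ˣ, b ∈ A ∧
      (b : ZMod n) = ((n / 2 : ℕ) : ZMod n) - (a : ZMod n))
    (r : ZMod n) (hr : Odd r.val) (y : ZMod n) :
    (Even y.val → ∃ t : ℝ, superchar n (unitOrbit n A r) y = (t : ℂ))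
    ∧ (Odd y.val → (superchar n (unitOrbit n A r) y).re = 0) := by
  haveI : NeZero n := ⟨hn.ne'⟩
  have key := superchar_eq n (unitOrbit n A r) y (by
    rintro _ ⟨a, ha, rfl⟩
    obtain ⟨b, hb, hba⟩ := hA a ha
    refine ⟨b, hb, ?_⟩
    simp only [hba, sub_mul, (half_mul n he r).1 hr])
  constructor
  · intro hy
    rw [(half_mul n he y).2 hy, AddChar.map_zero_eq_one, one_mul] at key
    obtain ⟨t, ht⟩ := Complex.conj_eq_iff_real.1 key.symm
    exact ⟨t, ht⟩
  · intro hy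
    rw [(half_mul n he y).1 hy, char_half n he] at key
    have := congrArg Complex.re key
    simp at this
    linarith
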